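/- The equational theory LOPP is sound and complete for linear optical circuits: for any two raw LOPP circuits C₁ and C₂ with the same number of modes, LOPP ⊢ C₁ = C₂ if and only if ⟦C₁⟧ = ⟦C₂⟧. (Theorem 1 of the paper.) -/

import Mathlib

open Matrix Complex

noncomputable section

/-- Raw LOPP circuits: syntactic terms generated by phase shifters, beam splitters,
the identity wire, the swap and the empty circuit, closed under sequential
composition `comp C₂ C₁` (meaning `C₂ ∘ C₁`) and parallel composition `tens`. -/
inductive LOPP : ℕ → Type
  | phase (φ : ℝ) : LOPP 1
  | bs (θ : ℝ) : LOPP 2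
  | wire : LOPP 1
  | swap : LOPP 2
  | empty : LOPP 0
  | comp {m : ℕ} : LOPP m → LOPP m → LOPP m
  | tens {m₁ m₂ : ℕ} : LOPP m₁ → LOPP m₂ → LOPP (m₁ + m₂)

/-- The interpretation `⟦C⟧` of an `m`-mode raw LOPP circuit as an `m×m` complex
matrix; parallel composition is interpreted as the direct sum. -/
noncomputable def sem : {m : ℕ} → LOPP m → Matrix (Fin m) (Fin m) ℂ
  | _, LOPP.phase φ => Matrix.of fun _ _ => Complex.exp (φ * Complex.I)
  | _, LOPP.bs θ =>
      !![(Real.cos θ : ℂ), Complex.I * (Real.sin θ : ℂ);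
         Complex.I * (Real.sin θ : ℂ), (Real.cos θ : ℂ)]
  | _, LOPP.wire => 1
  | _, LOPP.swap => !![0, 1; 1, 0]
  | _, LOPP.empty => 1
  | _, LOPP.comp C₂ C₁ => sem C₂ * sem C₁
  | _, LOPP.tens C₁ C₂ =>
      Matrix.reindex finSumFinEquiv finSumFinEquiv
        (Matrix.fromBlocks (sem C₁) 0 0 (sem C₂))

/-- Transport of a raw circuit along an equality of mode numbers. -/
def castC {m m' : ℕ} (h : m = m') (C : LOPP m) : LOPP m' := h ▸ C

/-- `id^{⊗m}`: `m` parallel copies of the identity wire. -/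
def idPow : (m : ℕ) → LOPP m
  | 0 => LOPP.empty
  | m + 1 => LOPP.tens (idPow m) LOPP.wire

/-- The swap circuits `σ₀ := id`, `σ_{m+1} := (swap ⊗ id^{⊗m}) ∘ (id ⊗ σ_m)`. -/
def sigmaC : (m : ℕ) → LOPP (m + 1)
  | 0 => LOPP.wire
  | m + 1 =>
      LOPP.comp (castC (by omega) (LOPP.tens LOPP.swap (idPow m)))
        (castC (by omega) (LOPP.tens LOPP.wire (sigmaC m)))

/-- The equational theory LOPP: the smallest congruence (with respect to `∘` and `⊗`)
containing the structural equations of props and the axioms (A)–(G) of the paper. -/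
inductive LOPPeq : {m : ℕ} → LOPP m → LOPP m → Prop
  | refl {m} (C : LOPP m) : LOPPeq C C
  | symm {m} {C D : LOPP m} : LOPPeq C D → LOPPeq D C
  | trans {m} {C D E : LOPP m} : LOPPeq C D → LOPPeq D E → LOPPeq C E
  | compCongr {m} {C₂ D₂ C₁ D₁ : LOPP m} :
      LOPPeq C₂ D₂ → LOPPeq C₁ D₁ → LOPPeq (C₂.comp C₁) (D₂.comp D₁)
  | tensCongr {m₁ m₂} {C₁ D₁ : LOPP m₁} {C₂ D₂ : LOPP m₂} :
      LOPPeq C₁ D₁ → LOPPeq C₂ D₂ → LOPPeq (C₁.tens C₂) (D₁.tens D₂)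
  -- structural equations
  | idComp {m} (C : LOPP m) : LOPPeq ((idPow m).comp C) C
  | compId {m} (C : LOPP m) : LOPPeq (C.comp (idPow m)) C
  | compAssoc {m} (C₃ C₂ C₁ : LOPP m) :
      LOPPeq ((C₃.comp C₂).comp C₁) (C₃.comp (C₂.comp C₁))
  | emptyTens {m} (C : LOPP m) : LOPPeq (castC (Nat.zero_add m) (LOPP.empty.tens C)) C
  | tensEmpty {m} (C : LOPP m) : LOPPeq (C.tens LOPP.empty) C
  | tensAssoc {m₁ m₂ m₃} (C₁ : LOPP m₁) (C₂ : LOPP m₂) (C₃ : LOPP m₃) :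
      LOPPeq (castC (Nat.add_assoc m₁ m₂ m₃) ((C₁.tens C₂).tens C₃))
        (C₁.tens (C₂.tens C₃))
  | interchange {m₁ m₂} (C₂ C₁ : LOPP m₁) (C₄ C₃ : LOPP m₂) :
      LOPPeq ((C₂.comp C₁).tens (C₄.comp C₃)) ((C₂.tens C₄).comp (C₁.tens C₃))
  | swapNat {m} (C : LOPP m) :
      LOPPeq ((sigmaC m).comp (C.tens LOPP.wire))
        ((castC (Nat.add_comm 1 m) (LOPP.wire.tens C)).comp (sigmaC m))
  | swapSwap : LOPPeq (LOPP.swap.comp LOPP.swap) (LOPP.wire.tens LOPP.wire)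
  -- axiom (A)
  | phaseZero : LOPPeq (LOPP.phase 0) LOPP.wire
  | phaseTwoPi : LOPPeq (LOPP.phase (2 * Real.pi)) LOPP.wire
  -- axiom (B)
  | bsZero : LOPPeq (LOPP.bs 0) (LOPP.wire.tens LOPP.wire)
  -- axiom (C)
  | swapDef : LOPPeq LOPP.swap
      (((LOPP.phase (-(Real.pi / 2))).tens (LOPP.phase (-(Real.pi / 2)))).comp
        (LOPP.bs (Real.pi / 2)))
  -- axiom (D)
  | phaseAdd (φ₁ φ₂ : ℝ) :
      LOPPeq ((LOPP.phase φ₂).comp (LOPP.phase φ₁)) (LOPP.phase (φ₁ + φ₂))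
  -- axiom (E)
  | bsPhase (θ φ : ℝ) :
      LOPPeq ((LOPP.bs θ).comp ((LOPP.phase φ).tens (LOPP.phase φ)))
        (((LOPP.phase φ).tens (LOPP.phase φ)).comp (LOPP.bs θ))
  -- axiom (F): the parameters β are the unique ones satisfying the side conditions
  -- for which both sides have the same interpretation
  | euler2 (α₁ α₂ α₃ β₁ β₂ β₃ β₄ : ℝ)
      (h₁ : β₁ ∈ Set.Ico 0 Real.pi) (h₂ : β₂ ∈ Set.Ico 0 Real.pi)
      (h₃ : β₃ ∈ Set.Ico 0 (2 * Real.pi)) (h₄ : β₄ ∈ Set.Ico 0 (2 * Real.pi))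
      (h₅ : (β₂ = 0 ∨ β₂ = Real.pi / 2) → β₁ = 0)
      (hsem :
        sem ((LOPP.bs α₃).comp (((LOPP.phase α₂).tens LOPP.wire).comp (LOPP.bs α₁)))
          = sem (((LOPP.phase β₃).tens (LOPP.phase β₄)).comp
              ((LOPP.bs β₂).comp ((LOPP.phase β₁).tens LOPP.wire)))) :
      LOPPeq ((LOPP.bs α₃).comp (((LOPP.phase α₂).tens LOPP.wire).comp (LOPP.bs α₁)))
        (((LOPP.phase β₃).tens (LOPP.phase β₄)).comp
          ((LOPP.bs β₂).comp ((LOPP.phase β₁).tens LOPP.wire)))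
  -- axiom (G)
  | euler3 (γ₁ γ₂ γ₃ γ₄ δ₁ δ₂ δ₃ δ₄ δ₅ δ₆ δ₇ δ₈ δ₉ : ℝ)
      (h₁ : δ₁ ∈ Set.Ico 0 Real.pi) (h₂ : δ₂ ∈ Set.Ico 0 Real.pi)
      (h₃ : δ₃ ∈ Set.Ico 0 Real.pi) (h₄ : δ₄ ∈ Set.Ico 0 Real.pi)
      (h₅ : δ₅ ∈ Set.Ico 0 Real.pi) (h₆ : δ₆ ∈ Set.Ico 0 Real.pi)
      (h₇ : δ₇ ∈ Set.Ico 0 (2 * Real.pi)) (h₈ : δ₈ ∈ Set.Ico 0 (2 * Real.pi))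
      (h₉ : δ₉ ∈ Set.Ico 0 (2 * Real.pi))
      (h₁₃ : (δ₃ = 0 ∨ δ₃ = Real.pi / 2) → δ₁ = 0)
      (h₂₄ : (δ₄ = 0 ∨ δ₄ = Real.pi / 2) → δ₂ = 0)
      (h₃₄ : δ₄ = 0 → δ₃ = 0)
      (h₅₆ : (δ₆ = 0 ∨ δ₆ = Real.pi / 2) → δ₅ = 0)
      (hsem :
        sem (((LOPP.bs γ₄).tens LOPP.wire).comp
            ((LOPP.wire.tens (LOPP.bs γ₃)).comp
              ((((LOPP.phase γ₂).tens LOPP.wire).tens LOPP.wire).comp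
                ((LOPP.bs γ₁).tens LOPP.wire))))
          = sem ((LOPP.wire.tens (LOPP.wire.tens (LOPP.phase δ₉))).comp
              ((LOPP.wire.tens ((LOPP.phase δ₈).tens LOPP.wire)).comp
                ((((LOPP.phase δ₇).tens LOPP.wire).tens LOPP.wire).comp
                  ((LOPP.wire.tens (LOPP.bs δ₆)).comp
                    ((LOPP.wire.tens ((LOPP.phase δ₅).tens LOPP.wire)).comp
                      (((LOPP.bs δ₄).tens LOPP.wire).comp
                        ((LOPP.wire.tens (LOPP.bs δ₃)).comp
                          ((((LOPP.phase δ₂).tens LOPP.wire).tens LOPP.wire).comp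
                            (LOPP.wire.tens ((LOPP.phase δ₁).tens LOPP.wire))))))))))) :
      LOPPeq
        (((LOPP.bs γ₄).tens LOPP.wire).comp
          ((LOPP.wire.tens (LOPP.bs γ₃)).comp
            ((((LOPP.phase γ₂).tens LOPP.wire).tens LOPP.wire).comp
              ((LOPP.bs γ₁).tens LOPP.wire))))
        ((LOPP.wire.tens (LOPP.wire.tens (LOPP.phase δ₉))).comp
          ((LOPP.wire.tens ((LOPP.phase δ₈).tens LOPP.wire)).comp
            ((((LOPP.phase δ₇).tens LOPP.wire).tens LOPP.wire).comp
              ((LOPP.wire.tens (LOPP.bs δ₆)).comp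
                ((LOPP.wire.tens ((LOPP.phase δ₅).tens LOPP.wire)).comp
                  (((LOPP.bs δ₄).tens LOPP.wire).comp
                    ((LOPP.wire.tens (LOPP.bs δ₃)).comp
                      ((((LOPP.phase δ₂).tens LOPP.wire).tens LOPP.wire).comp
                        (LOPP.wire.tens ((LOPP.phase δ₁).tens LOPP.wire))))))))))

/-! ## Soundness -/

theorem sem_castC {m n : ℕ} (h : m = n) (C : LOPP m) (i j : Fin n) :
    sem (castC h C) i j = sem C (Fin.cast h.symm i) (Fin.cast h.symm j) := by
  subst h; rfl

theorem sem_tens_ll {m n : ℕ} (C : LOPP m) (D : LOPP n) (i j : Fin m) :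
    sem (C.tens D) (Fin.castAdd n i) (Fin.castAdd n j) = sem C i j := by
  simp [sem]

theorem sem_tens_lr {m n : ℕ} (C : LOPP m) (D : LOPP n) (i : Fin m) (j : Fin n) :
    sem (C.tens D) (Fin.castAdd n i) (Fin.natAdd m j) = 0 := by
  simp [sem]

theorem sem_tens_rl {m n : ℕ} (C : LOPP m) (D : LOPP n) (i : Fin n) (j : Fin m) :
    sem (C.tens D) (Fin.natAdd m i) (Fin.castAdd n j) = 0 := by
  simp [sem]

theorem sem_tens_rr {m n : ℕ} (C : LOPP m) (D : LOPP n) (i j : Fin n) :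
    sem (C.tens D) (Fin.natAdd m i) (Fin.natAdd m j) = sem D i j := by
  simp [sem]

theorem sem_idPow : ∀ m, sem (idPow m) = 1
  | 0 => rfl
  | m + 1 => by
      simp only [idPow, sem, sem_idPow m, Matrix.fromBlocks_one]
      ext i j
      simp [Matrix.one_apply]

/-- `castC (wire ⊗ C)`. -/
def upC {n : ℕ} (C : LOPP n) : LOPP (n + 1) := castC (Nat.add_comm 1 n) (LOPP.wire.tens C)

theorem fin_cast_zero (n : ℕ) :
    Fin.cast (Nat.add_comm 1 n).symm (0 : Fin (n + 1)) = Fin.castAdd n (0 : Fin 1) := by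
  ext; simp

theorem fin_cast_succ (n : ℕ) (i : Fin n) :
    Fin.cast (Nat.add_comm 1 n).symm i.succ = Fin.natAdd 1 i := by
  ext; simp; omega

theorem sem_upC_zz {n : ℕ} (C : LOPP n) : sem (upC C) 0 0 = 1 := by
  rw [upC, sem_castC, fin_cast_zero, sem_tens_ll]; simp [sem]

theorem sem_upC_zs {n : ℕ} (C : LOPP n) (j : Fin n) : sem (upC C) 0 j.succ = 0 := by
  rw [upC, sem_castC, fin_cast_zero, fin_cast_succ, sem_tens_lr]

theorem sem_upC_sz {n : ℕ} (C : LOPP n) (j : Fin n) : sem (upC C) j.succ 0 = 0 := by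
  rw [upC, sem_castC, fin_cast_zero, fin_cast_succ, sem_tens_rl]

theorem sem_upC_ss {n : ℕ} (C : LOPP n) (i j : Fin n) :
    sem (upC C) i.succ j.succ = sem C i j := by
  rw [upC, sem_castC, fin_cast_succ, fin_cast_succ, sem_tens_rr]

theorem sem_down_cc {n : ℕ} (C : LOPP n) (i j : Fin n) :
    sem (C.tens LOPP.wire) i.castSucc j.castSucc = sem C i j := sem_tens_ll _ _ _ _

theorem sem_down_cl {n : ℕ} (C : LOPP n) (i : Fin n) :
    sem (C.tens LOPP.wire) i.castSucc (Fin.last n) = 0 := sem_tens_lr C LOPP.wire i 0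

theorem sem_down_lc {n : ℕ} (C : LOPP n) (i : Fin n) :
    sem (C.tens LOPP.wire) (Fin.last n) i.castSucc = 0 := sem_tens_rl C LOPP.wire 0 i

theorem sem_down_ll {n : ℕ} (C : LOPP n) :
    sem (C.tens LOPP.wire) (Fin.last n) (Fin.last n) = 1 := by
  have := sem_tens_rr C LOPP.wire 0 0
  rw [show Fin.last n = Fin.natAdd n (0 : Fin 1) from rfl, this]
  simp [sem]

theorem sem_swapId (m : ℕ) (h : 2 + m = m + 2) :
    sem (castC h (LOPP.tens LOPP.swap (idPow m)))
      = (1 : Matrix (Fin (m + 2)) (Fin (m + 2)) ℂ).submatrix (Equiv.swap 0 1) id := by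
  have h0 : Fin.cast h.symm (0 : Fin (m + 2)) = Fin.castAdd m (0 : Fin 2) := by ext; simp
  have h1 : Fin.cast h.symm (1 : Fin (m + 2)) = Fin.castAdd m (1 : Fin 2) := by ext; simp
  have h2 (i : Fin m) : Fin.cast h.symm i.succ.succ = Fin.natAdd 2 i := by
    ext; simp; omega
  have s1 : (Fin.succ 0 : Fin (m + 2)) = 1 := rfl
  have e1 (i : Fin m) : i.succ.succ ≠ (1 : Fin (m + 2)) := by
    intro h; simp [Fin.ext_iff] at h
  have e0 (i : Fin m) : i.succ.succ ≠ (0 : Fin (m + 2)) := by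
    intro h; simp [Fin.ext_iff] at h
  have e3 (i : Fin m) : Equiv.swap (0 : Fin (m + 2)) 1 i.succ.succ = i.succ.succ :=
    Equiv.swap_apply_of_ne_of_ne (e0 i) (e1 i)
  ext i j
  rw [sem_castC]
  refine Fin.cases ?_ (fun i => Fin.cases ?_ (fun i => ?_) i) i <;>
  refine Fin.cases ?_ (fun j => Fin.cases ?_ (fun j => ?_) j) j <;>
  simp only [s1, h0, h1, h2, sem_tens_ll, sem_tens_lr, sem_tens_rl, sem_tens_rr, sem_idPow,
    Matrix.submatrix_apply, e3, Equiv.swap_apply_left, Equiv.swap_apply_right, id]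
  all_goals first
    | (erw [e3]; simp [Matrix.one_apply, e0, e1]; done)
    | (simp [sem, Matrix.one_apply, Ne.symm (e0 _), Ne.symm (e1 _)]; done)

theorem sem_sigmaC : ∀ m, (sem (sigmaC m) 0 (Fin.last m) = 1) ∧
    (∀ j : Fin m, sem (sigmaC m) 0 j.castSucc = 0) ∧
    (∀ j : Fin m, sem (sigmaC m) j.succ (Fin.last m) = 0) ∧
    (∀ i j : Fin m, sem (sigmaC m) i.succ j.castSucc = (1 : Matrix (Fin m) (Fin m) ℂ) i j)
  | 0 => by
      refine ⟨by simp [sigmaC, sem], fun j => j.elim0, fun j => j.elim0, fun j => j.elim0⟩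
  | m + 1 => by
      obtain ⟨a, b, c, d⟩ := sem_sigmaC m
      have key : sem (sigmaC (m + 1)) = (sem (upC (sigmaC m))).submatrix (Equiv.swap 0 1) id := by
        have : sem (sigmaC (m + 1)) = sem (castC (by omega : 2 + m = m + 2)
            (LOPP.tens LOPP.swap (idPow m))) * sem (upC (sigmaC m)) := rfl
        rw [this, sem_swapId]
        ext i j
        simp [Matrix.mul_apply, Matrix.one_apply]
      have s1 : (Fin.succ 0 : Fin (m + 2)) = 1 := rfl
      have s2 : Fin.last (m + 1) = (Fin.last m).succ := rfl
      have e3 (i : Fin m) : Equiv.swap (0 : Fin (m + 2)) 1 i.succ.succ = i.succ.succ := by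
        apply Equiv.swap_apply_of_ne_of_ne <;> intro h <;> simp [Fin.ext_iff] at h
      have k0 (j) : sem (sigmaC (m + 1)) 0 j = sem (upC (sigmaC m)) (Fin.succ 0) j := by
        rw [key]; simp
      have k1 (j) : sem (sigmaC (m + 1)) (Fin.succ 0) j = sem (upC (sigmaC m)) 0 j := by
        rw [key]; simp
      have k2 (i j) : sem (sigmaC (m + 1)) (Fin.succ (Fin.succ i)) j
          = sem (upC (sigmaC m)) (Fin.succ (Fin.succ i)) j := by
        rw [key]; simp [e3]
      refine ⟨?_, ?_, ?_, ?_⟩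
      · rw [k0, s2, sem_upC_ss, a]
      · intro j
        rw [k0]
        refine Fin.cases ?_ (fun j => ?_) j
        · exact sem_upC_sz _ _
        · rw [Fin.castSucc_succ, sem_upC_ss, b]
      · intro i
        refine Fin.cases ?_ (fun i => ?_) i
        · rw [k1, s2, sem_upC_zs]
        · rw [k2, s2, sem_upC_ss, c]
      · intro i j
        refine Fin.cases ?_ (fun i => ?_) i <;> refine Fin.cases ?_ (fun j => ?_) j
        · rw [k1]; simpa using sem_upC_zz _
        · rw [k1, Fin.castSucc_succ, sem_upC_zs]; simp [Matrix.one_apply, Ne.symm (Fin.succ_ne_zero _)]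
        · rw [k2]
          simpa [Matrix.one_apply] using sem_upC_sz (sigmaC m) i.succ
        · rw [k2, Fin.castSucc_succ, sem_upC_ss, d]; simp [Matrix.one_apply]

theorem sem_tens_mul {m n : ℕ} (C₂ C₁ : LOPP m) (C₄ C₃ : LOPP n) :
    sem ((C₂.comp C₁).tens (C₄.comp C₃)) = sem ((C₂.tens C₄).comp (C₁.tens C₃)) := by
  simp only [sem, Matrix.reindex_apply, Matrix.submatrix_mul_equiv, Matrix.fromBlocks_multiply]
  simp

theorem sem_tens_assoc {m₁ m₂ m₃ : ℕ} (C₁ : LOPP m₁) (C₂ : LOPP m₂) (C₃ : LOPP m₃) :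
    sem (castC (Nat.add_assoc m₁ m₂ m₃) ((C₁.tens C₂).tens C₃)) =
      sem (C₁.tens (C₂.tens C₃)) := by
  have h1 (i : Fin m₁) : Fin.cast (Nat.add_assoc m₁ m₂ m₃).symm (Fin.castAdd (m₂ + m₃) i)
      = Fin.castAdd m₃ (Fin.castAdd m₂ i) := by ext; simp
  have h2 (i : Fin m₂) : Fin.cast (Nat.add_assoc m₁ m₂ m₃).symm
      (Fin.natAdd m₁ (Fin.castAdd m₃ i)) = Fin.castAdd m₃ (Fin.natAdd m₁ i) := by ext; simp
  have h3 (i : Fin m₃) : Fin.cast (Nat.add_assoc m₁ m₂ m₃).symm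
      (Fin.natAdd m₁ (Fin.natAdd m₂ i)) = Fin.natAdd (m₁ + m₂) i := by ext; simp; omega
  ext i j
  rw [sem_castC]
  refine Fin.addCases (fun i => ?_) (fun i => Fin.addCases (fun i => ?_) (fun i => ?_) i) i <;>
  refine Fin.addCases (fun j => ?_) (fun j => Fin.addCases (fun j => ?_) (fun j => ?_) j) j <;>
  simp only [h1, h2, h3, sem_tens_ll, sem_tens_lr, sem_tens_rl, sem_tens_rr]

theorem soundness {m : ℕ} {C D : LOPP m} (h : LOPPeq C D) : sem C = sem D := by
  induction h with
  | refl C => rfl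
  | symm _ ih => exact ih.symm
  | trans _ _ ih1 ih2 => exact ih1.trans ih2
  | compCongr _ _ ih1 ih2 => simp only [sem, ih1, ih2]
  | tensCongr _ _ ih1 ih2 => simp only [sem, ih1, ih2]
  | idComp C => simp [sem, sem_idPow]
  | compId C => simp [sem, sem_idPow]
  | compAssoc => simp [sem, Matrix.mul_assoc]
  | @emptyTens m C =>
      ext i j
      have h (i : Fin m) : Fin.cast (Nat.zero_add m).symm i = Fin.natAdd 0 i := by ext; simp
      rw [sem_castC, h, h, sem_tens_rr]
  | tensEmpty C =>
      ext i j
      exact sem_tens_ll C LOPP.empty i j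
  | tensAssoc C₁ C₂ C₃ => exact sem_tens_assoc _ _ _
  | interchange => exact sem_tens_mul _ _ _ _
  | @swapNat m C =>
      obtain ⟨a, b, c, d⟩ := sem_sigmaC m
      change sem (sigmaC m) * sem (C.tens LOPP.wire) = sem (upC C) * sem (sigmaC m)
      ext i j
      rw [Matrix.mul_apply, Matrix.mul_apply, Fin.sum_univ_castSucc, Fin.sum_univ_succ]
      refine Fin.cases ?_ (fun i => ?_) i <;> refine Fin.lastCases ?_ (fun j => ?_) j <;>
      simp [a, b, c, d, sem_upC_zz, sem_upC_zs, sem_upC_sz, sem_upC_ss,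
        sem_down_cc, sem_down_cl, sem_down_lc, sem_down_ll, Matrix.one_apply]
  | swapSwap =>
      ext i j
      fin_cases i <;> fin_cases j <;>
      simp [sem, Matrix.mul_apply, Fin.sum_univ_two, finSumFinEquiv, Fin.addCases]
  | phaseZero => ext i j; fin_cases i; fin_cases j; simp [sem]
  | phaseTwoPi => ext i j; fin_cases i; fin_cases j; simp [sem]
  | bsZero =>
      ext i j
      fin_cases i <;> fin_cases j <;>
      simp [sem, finSumFinEquiv, Fin.addCases]
  | swapDef =>
      have h : Complex.exp (-(Real.pi / 2 * Complex.I)) = -Complex.I := by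
        rw [Complex.exp_neg, Complex.exp_pi_div_two_mul_I]; simp
      ext i j
      fin_cases i <;> fin_cases j <;>
      simp [sem, Matrix.mul_apply, Fin.sum_univ_two, finSumFinEquiv, Fin.addCases, h]
  | phaseAdd φ₁ φ₂ =>
      ext i j
      simp [sem, Matrix.mul_apply, ← Complex.exp_add]
      ring_nf
  | bsPhase θ φ =>
      ext i j
      fin_cases i <;> fin_cases j <;>
      simp [sem, Matrix.mul_apply, Fin.sum_univ_two, finSumFinEquiv, Fin.addCases, mul_comm]
  | euler2 => assumption
  | euler3 => assumption

theorem sem_unitary {m : ℕ} (C : LOPP m) : sem C * (sem C)ᴴ = 1 := by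
  induction C with
  | phase φ =>
      ext i j; fin_cases i; fin_cases j
      simp [sem, Matrix.mul_apply, ← Complex.exp_conj, ← Complex.exp_add]
  | bs θ =>
      have h : (Complex.cos θ) * Complex.cos θ + Complex.sin θ * Complex.sin θ = 1 := by
        have := Complex.cos_sq_add_sin_sq θ
        linear_combination this
      ext i j
      fin_cases i <;> fin_cases j <;>
      simp [sem, Matrix.mul_apply, Fin.sum_univ_two, ← Complex.cos_conj, ← Complex.sin_conj]
      · linear_combination h - Complex.sin θ * Complex.sin θ * Complex.I_mul_I
      · ring
      · ring
      · linear_combination h - Complex.sin θ * Complex.sin θ * Complex.I_mul_I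
  | wire => simp [sem]
  | swap => 
      ext i j
      fin_cases i <;> fin_cases j <;> simp [sem, Matrix.mul_apply, Fin.sum_univ_two]
  | empty => simp [sem]
  | comp C D h1 h2 =>
      simp only [sem, Matrix.conjTranspose_mul]
      rw [Matrix.mul_assoc, ← Matrix.mul_assoc (sem D), h2, Matrix.one_mul, h1]
  | tens C D h1 h2 =>
      simp only [sem, Matrix.reindex_apply, Matrix.conjTranspose_submatrix,
        Matrix.submatrix_mul_equiv, Matrix.fromBlocks_conjTranspose, Matrix.fromBlocks_multiply]
      simp [h1, h2]

/-! ## The monoid of circuits modulo the equational theory -/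

instance circSetoid (m : ℕ) : Setoid (LOPP m) :=
  ⟨LOPPeq, LOPPeq.refl, LOPPeq.symm, LOPPeq.trans⟩

/-- Circuits modulo provable equality. -/
def QC (m : ℕ) : Type := Quotient (circSetoid m)

/-- The class of a circuit. -/
def cls {m : ℕ} (C : LOPP m) : QC m := Quotient.mk (circSetoid m) C

theorem cls_eq {m : ℕ} {C D : LOPP m} : cls C = cls D ↔ LOPPeq C D :=
  ⟨fun h => Quotient.exact h, fun h => Quotient.sound h⟩

theorem cls_surj {m : ℕ} (x : QC m) : ∃ C, cls C = x := Quotient.exists_rep x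

instance monoidQC (m : ℕ) : Monoid (QC m) where
  one := cls (idPow m)
  mul := Quotient.map₂ LOPP.comp (fun _ _ h _ _ h' => LOPPeq.compCongr h h')
  mul_assoc a b c := by
    obtain ⟨a, rfl⟩ := cls_surj a
    obtain ⟨b, rfl⟩ := cls_surj b
    obtain ⟨c, rfl⟩ := cls_surj c
    exact cls_eq.2 (LOPPeq.compAssoc a b c)
  one_mul a := by
    obtain ⟨a, rfl⟩ := cls_surj a
    exact cls_eq.2 (LOPPeq.idComp a)
  mul_one a := by
    obtain ⟨a, rfl⟩ := cls_surj a
    exact cls_eq.2 (LOPPeq.compId a)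

theorem cls_comp {m : ℕ} (C D : LOPP m) : cls (C.comp D) = cls C * cls D := rfl
theorem cls_idPow (m : ℕ) : cls (idPow m) = 1 := rfl

/-- Interpretation on classes. -/
def semQ {m : ℕ} : QC m →* Matrix (Fin m) (Fin m) ℂ where
  toFun := Quotient.lift sem (fun _ _ h => soundness h)
  map_one' := sem_idPow m
  map_mul' a b := by
    obtain ⟨a, rfl⟩ := cls_surj a
    obtain ⟨b, rfl⟩ := cls_surj b
    rfl

theorem semQ_cls {m : ℕ} (C : LOPP m) : semQ (cls C) = sem C := rfl

/-- Parallel composition on classes. -/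
def tq {m n : ℕ} : QC m → QC n → QC (m + n) :=
  Quotient.map₂ LOPP.tens (fun _ _ h _ _ h' => LOPPeq.tensCongr h h')

theorem tq_cls {m n : ℕ} (C : LOPP m) (D : LOPP n) : tq (cls C) (cls D) = cls (C.tens D) := rfl

theorem tq_mul {m n : ℕ} (a b : QC m) (c d : QC n) :
    tq (a * b) (c * d) = tq a c * tq b d := by
  obtain ⟨a, rfl⟩ := cls_surj a
  obtain ⟨b, rfl⟩ := cls_surj b
  obtain ⟨c, rfl⟩ := cls_surj c
  obtain ⟨d, rfl⟩ := cls_surj d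
  exact cls_eq.2 (LOPPeq.interchange a b c d)

/-- Transport of classes. -/
def castQ {m n : ℕ} (h : m = n) (x : QC m) : QC n := h ▸ x

theorem cls_castC {m n : ℕ} (h : m = n) (C : LOPP m) : cls (castC h C) = castQ h (cls C) := by
  subst h; rfl

theorem castQ_castQ {l m n : ℕ} (h : l = m) (h' : m = n) (x : QC l) :
    castQ h' (castQ h x) = castQ (h.trans h') x := by
  subst h; subst h'; rfl

theorem castQ_rfl {m : ℕ} (h : m = m) (x : QC m) : castQ h x = x := rfl

theorem castQ_mul {m n : ℕ} (h : m = n) (x y : QC m) :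
    castQ h (x * y) = castQ h x * castQ h y := by
  subst h; rfl

theorem castQ_one {m n : ℕ} (h : m = n) : castQ h (1 : QC m) = 1 := by
  subst h; rfl

theorem tq_castQ_left {m n k : ℕ} (h : m = n) (x : QC m) (y : QC k) :
    tq (castQ h x) y = castQ (by rw [h]) (tq x y) := by
  subst h; rfl

theorem tq_castQ_right {m n k : ℕ} (h : m = n) (x : QC m) (y : QC k) :
    tq y (castQ h x) = castQ (by rw [h]) (tq y x) := by
  subst h; rfl

theorem tq_assoc {m n k : ℕ} (x : QC m) (y : QC n) (z : QC k) :
    castQ (Nat.add_assoc m n k) (tq (tq x y) z) = tq x (tq y z) := by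
  obtain ⟨x, rfl⟩ := cls_surj x
  obtain ⟨y, rfl⟩ := cls_surj y
  obtain ⟨z, rfl⟩ := cls_surj z
  rw [tq_cls, tq_cls, ← cls_castC]
  exact cls_eq.2 (LOPPeq.tensAssoc x y z)

theorem tq_assoc' {m n k : ℕ} (x : QC m) (y : QC n) (z : QC k) :
    tq (tq x y) z = castQ (Nat.add_assoc m n k).symm (tq x (tq y z)) := by
  rw [← tq_assoc, castQ_castQ]; rfl

theorem one_zero_tq {m : ℕ} (x : QC m) : tq (1 : QC 0) x = castQ (Nat.zero_add m).symm x := by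
  obtain ⟨x, rfl⟩ := cls_surj x
  have : castQ (Nat.zero_add m) (tq (1 : QC 0) (cls x)) = cls x := by
    rw [← cls_idPow, tq_cls, ← cls_castC]
    exact cls_eq.2 (LOPPeq.emptyTens x)
  rw [← congrArg (castQ (Nat.zero_add m).symm) this, castQ_castQ]; rfl

theorem tq_one_zero {m : ℕ} (x : QC m) : tq x (1 : QC 0) = x := by
  obtain ⟨x, rfl⟩ := cls_surj x
  exact cls_eq.2 (LOPPeq.tensEmpty x)

theorem cls_wire : cls LOPP.wire = 1 := by
  symm
  exact cls_eq.2 (LOPPeq.emptyTens LOPP.wire)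

theorem tq_one_wire (m : ℕ) : tq (1 : QC m) (1 : QC 1) = 1 := by
  rw [← cls_wire]; rfl

theorem tq_one_one (m : ℕ) : ∀ n, tq (1 : QC m) (1 : QC n) = 1
  | 0 => tq_one_zero _
  | n + 1 => by
    rw [← tq_one_wire n, ← tq_assoc, tq_one_one m n, tq_one_wire]; rfl

theorem tq_commute {m n : ℕ} (x : QC m) (y : QC n) :
    Commute (tq x (1 : QC n)) (tq (1 : QC m) y) := by
  rw [commute_iff_eq, ← tq_mul, ← tq_mul]; simp

/-- Add a wire below. -/
def down {n : ℕ} : QC n →* QC (n + 1) where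
  toFun x := tq x (1 : QC 1)
  map_one' := tq_one_wire n
  map_mul' x y := by rw [← tq_mul]; simp

/-- Add a wire above. -/
def up {n : ℕ} : QC n →* QC (n + 1) where
  toFun x := castQ (Nat.add_comm 1 n) (tq (1 : QC 1) x)
  map_one' := by rw [tq_one_one, castQ_one]
  map_mul' x y := by rw [← castQ_mul, ← tq_mul]; simp

theorem down_def {n : ℕ} (x : QC n) : down x = tq x (1 : QC 1) := rfl
theorem up_def {n : ℕ} (x : QC n) : up x = castQ (Nat.add_comm 1 n) (tq (1 : QC 1) x) := rfl

theorem up_down {n : ℕ} (x : QC n) : up (down x) = down (up x) := by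
  rw [up_def, down_def, down_def, up_def, tq_castQ_left, ← tq_assoc, castQ_castQ]

/-- A two-mode element on the first two modes. -/
def fst2 : (k : ℕ) → QC 2 →* QC (k + 2)
  | 0 => MonoidHom.id _
  | k + 1 => (down (n := k + 2)).comp (fst2 k)

theorem fst2_succ (k : ℕ) (X : QC 2) : fst2 (k + 1) X = down (fst2 k X) := rfl

theorem fst2_eq : ∀ (k : ℕ) (X : QC 2), fst2 k X = castQ (Nat.add_comm 2 k) (tq X (1 : QC k))
  | 0, X => by rw [tq_one_zero]; rfl
  | k + 1, X => by
    rw [fst2_succ, fst2_eq k X, down_def, tq_castQ_left, tq_assoc', castQ_castQ, tq_one_wire]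

theorem up_up_eq {k : ℕ} (A : QC k) :
    up (up A) = castQ (Nat.add_comm 2 k) (tq (1 : QC 2) A) := by
  rw [up_def, up_def, tq_castQ_right, ← tq_assoc, tq_one_one, castQ_castQ, castQ_castQ]

theorem fst2_commute {k : ℕ} (X : QC 2) (A : QC k) : Commute (fst2 k X) (up (up A)) := by
  rw [fst2_eq, up_up_eq, commute_iff_eq, ← castQ_mul, ← castQ_mul, (tq_commute X A).eq]

/-- Classes of generators. -/
def ph (φ : ℝ) : QC 1 := cls (LOPP.phase φ)
def bsq (θ : ℝ) : QC 2 := cls (LOPP.bs θ)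

/-- Elements generated by phases, beam splitters and adding wires. -/
inductive Good : ∀ {m : ℕ}, QC m → Prop
  | one {m : ℕ} : Good (1 : QC m)
  | mul {m : ℕ} {x y : QC m} : Good x → Good y → Good (x * y)
  | up {m : ℕ} {x : QC m} : Good x → Good (up x)
  | down {m : ℕ} {x : QC m} : Good x → Good (down x)
  | ph (φ : ℝ) : Good (ph φ)
  | bs (θ : ℝ) : Good (bsq θ)

theorem Good.castQ {m n : ℕ} (h : m = n) {x : QC m} (hx : Good x) : Good (castQ h x) := by
  subst h; exact hx

theorem Good.tq_one {m : ℕ} {x : QC m} (hx : Good x) : ∀ n, Good (tq x (1 : QC n))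
  | 0 => by rw [tq_one_zero]; exact hx
  | n + 1 => by
    rw [← tq_one_wire, ← tq_assoc]
    exact Good.castQ _ (Good.down (hx.tq_one n))

theorem Good.one_tq (m : ℕ) : ∀ {n : ℕ} {x : QC n}, Good x → Good (tq (1 : QC m) x) := by
  induction m with
  | zero => intro n x hx; rw [one_zero_tq]; exact hx.castQ _
  | succ m ih =>
    intro n x hx
    rw [← tq_one_wire, tq_assoc']
    refine Good.castQ _ ?_
    have h := ih hx.up
    rw [up_def, tq_castQ_right] at h
    have h2 := h.castQ (show m + (n + 1) = m + (1 + n) by omega)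
    rwa [castQ_castQ] at h2

theorem d_tq (a b : ℝ) : cls ((LOPP.phase a).tens (LOPP.phase b)) = down (ph a) * up (ph b) := by
  have : up (ph b) = tq (1 : QC 1) (ph b) := rfl
  rw [this, down_def, ← tq_mul]; simp; rfl

theorem good_all {m : ℕ} (x : QC m) : Good x := by
  obtain ⟨C, rfl⟩ := cls_surj x
  induction C with
  | phase φ => exact Good.ph φ
  | bs θ => exact Good.bs θ
  | wire => rw [cls_wire]; exact Good.one
  | swap =>
    rw [cls_eq.2 LOPPeq.swapDef, cls_comp, d_tq]
    exact ((Good.ph _).down.mul (Good.ph _).up).mul (Good.bs _)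
  | empty => exact Good.one
  | comp C D h1 h2 => exact h1.mul h2
  | tens C D h1 h2 =>
    have : cls (C.tens D) = tq (cls C) 1 * tq 1 (cls D) := by
      rw [← tq_mul]; simp; rfl
    rw [this]
    exact (h1.tq_one _).mul (h2.one_tq _)

/-! ### Interpretation of the constructions -/

theorem semQ_down {n : ℕ} (C : LOPP n) : semQ (down (cls C)) = sem (C.tens LOPP.wire) := by
  rw [down_def, ← cls_wire]; rfl

theorem semQ_up {n : ℕ} (C : LOPP n) : semQ (up (cls C)) = sem (upC C) := by
  rw [up_def, ← cls_wire, tq_cls, ← cls_castC]; rfl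

theorem semQ_down_cc {n : ℕ} (x : QC n) (i j : Fin n) :
    semQ (down x) i.castSucc j.castSucc = semQ x i j := by
  obtain ⟨C, rfl⟩ := cls_surj x
  rw [semQ_down]; exact sem_down_cc _ _ _

theorem semQ_down_cl {n : ℕ} (x : QC n) (i : Fin n) :
    semQ (down x) i.castSucc (Fin.last n) = 0 := by
  obtain ⟨C, rfl⟩ := cls_surj x
  rw [semQ_down]; exact sem_down_cl _ _

theorem semQ_down_lc {n : ℕ} (x : QC n) (i : Fin n) :
    semQ (down x) (Fin.last n) i.castSucc = 0 := by
  obtain ⟨C, rfl⟩ := cls_surj x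
  rw [semQ_down]; exact sem_down_lc _ _

theorem semQ_down_ll {n : ℕ} (x : QC n) :
    semQ (down x) (Fin.last n) (Fin.last n) = 1 := by
  obtain ⟨C, rfl⟩ := cls_surj x
  rw [semQ_down]; exact sem_down_ll _

theorem semQ_up_zz {n : ℕ} (x : QC n) : semQ (up x) 0 0 = 1 := by
  obtain ⟨C, rfl⟩ := cls_surj x
  rw [semQ_up]; exact sem_upC_zz _

theorem semQ_up_zs {n : ℕ} (x : QC n) (i : Fin n) : semQ (up x) 0 i.succ = 0 := by
  obtain ⟨C, rfl⟩ := cls_surj x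
  rw [semQ_up]; exact sem_upC_zs _ _

theorem semQ_up_sz {n : ℕ} (x : QC n) (i : Fin n) : semQ (up x) i.succ 0 = 0 := by
  obtain ⟨C, rfl⟩ := cls_surj x
  rw [semQ_up]; exact sem_upC_sz _ _

theorem semQ_up_ss {n : ℕ} (x : QC n) (i j : Fin n) :
    semQ (up x) i.succ j.succ = semQ x i j := by
  obtain ⟨C, rfl⟩ := cls_surj x
  rw [semQ_up]; exact sem_upC_ss _ _ _

theorem semQ_unitary {n : ℕ} (x : QC n) : semQ x * (semQ x)ᴴ = 1 := by
  obtain ⟨C, rfl⟩ := cls_surj x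
  exact sem_unitary C

theorem semQ_up_inj {n : ℕ} (x : QC n) (h : semQ (up x) = 1) : semQ x = 1 := by
  ext i j
  rw [← semQ_up_ss, h]; simp [Matrix.one_apply]

/-- Phases on two modes. -/
def dg (a b : ℝ) : QC 2 := down (ph a) * up (ph b)

theorem semQ_ph (a : ℝ) : semQ (ph a) = !![Complex.exp (a * Complex.I)] := by
  ext i j; fin_cases i; fin_cases j; rfl

theorem semQ_down_one (x : QC 1) : semQ (down x) = !![semQ x 0 0, 0; 0, 1] := by
  ext i j
  fin_cases i <;> fin_cases j
  · exact semQ_down_cc x 0 0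
  · exact semQ_down_cl x 0
  · exact semQ_down_lc x 0
  · exact semQ_down_ll x

theorem semQ_up_one (x : QC 1) : semQ (up x) = !![1, 0; 0, semQ x 0 0] := by
  ext i j
  fin_cases i <;> fin_cases j
  · exact semQ_up_zz x
  · exact semQ_up_zs x 0
  · exact semQ_up_sz x 0
  · exact semQ_up_ss x 0 0

theorem semQ_down_two (x : QC 2) : semQ (down x) =
    !![semQ x 0 0, semQ x 0 1, 0; semQ x 1 0, semQ x 1 1, 0; 0, 0, 1] := by
  ext i j
  fin_cases i <;> fin_cases j
  · exact semQ_down_cc x 0 0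
  · exact semQ_down_cc x 0 1
  · exact semQ_down_cl x 0
  · exact semQ_down_cc x 1 0
  · exact semQ_down_cc x 1 1
  · exact semQ_down_cl x 1
  · exact semQ_down_lc x 0
  · exact semQ_down_lc x 1
  · exact semQ_down_ll x

theorem semQ_up_two (x : QC 2) : semQ (up x) =
    !![1, 0, 0; 0, semQ x 0 0, semQ x 0 1; 0, semQ x 1 0, semQ x 1 1] := by
  ext i j
  fin_cases i <;> fin_cases j
  · exact semQ_up_zz x
  · exact semQ_up_zs x 0
  · exact semQ_up_zs x 1
  · exact semQ_up_sz x 0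
  · exact semQ_up_ss x 0 0
  · exact semQ_up_ss x 0 1
  · exact semQ_up_sz x 1
  · exact semQ_up_ss x 1 0
  · exact semQ_up_ss x 1 1

theorem semQ_dg (a b : ℝ) :
    semQ (dg a b) = !![Complex.exp (a * Complex.I), 0; 0, Complex.exp (b * Complex.I)] := by
  rw [dg, map_mul, semQ_down_one, semQ_up_one, semQ_ph, semQ_ph]
  simp

theorem semQ_bsq (θ : ℝ) : semQ (bsq θ) =
    !![(Real.cos θ : ℂ), Complex.I * (Real.sin θ : ℂ);
         Complex.I * (Real.sin θ : ℂ), (Real.cos θ : ℂ)] := rfl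

/-! ## Phases -/

theorem ph_mul (a b : ℝ) : ph a * ph b = ph (a + b) := by
  rw [add_comm]; exact cls_eq.2 (LOPPeq.phaseAdd b a)

theorem ph_zero : ph 0 = 1 := by
  rw [← cls_wire]; exact cls_eq.2 LOPPeq.phaseZero

theorem ph_two_pi : ph (2 * Real.pi) = 1 := by
  rw [← cls_wire]; exact cls_eq.2 LOPPeq.phaseTwoPi

theorem ph_nat (n : ℕ) : ph (n * (2 * Real.pi)) = 1 := by
  induction n with
  | zero => simp [ph_zero]
  | succ n ih =>
    have : ((n + 1 : ℕ) : ℝ) * (2 * Real.pi) = n * (2 * Real.pi) + 2 * Real.pi := by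
      push_cast; ring
    rw [this, ← ph_mul, ih, ph_two_pi, one_mul]

theorem ph_int (n : ℤ) : ph (n * (2 * Real.pi)) = 1 := by
  obtain ⟨k, rfl | rfl⟩ := n.eq_nat_or_neg
  · exact_mod_cast ph_nat k
  · have h := ph_mul ((-(k : ℤ) : ℤ) * (2 * Real.pi)) (k * (2 * Real.pi))
    rw [ph_nat, mul_one] at h
    rw [h, ← ph_zero]; congr 1; push_cast; ring

theorem ph_eq {a b : ℝ} (h : Complex.exp (a * Complex.I) = Complex.exp (b * Complex.I)) :
    ph a = ph b := by
  obtain ⟨n, hn⟩ := Complex.exp_eq_exp_iff_exists_int.1 h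
  have h1 : (a : ℂ) = b + n * (2 * Real.pi) := by
    apply mul_right_cancel₀ Complex.I_ne_zero
    linear_combination hn
  have h2 : a = b + n * (2 * Real.pi) := by exact_mod_cast h1
  rw [h2, ← ph_mul, ph_int, mul_one]

theorem exists_angle (w : ℂ) (hw : w * star w = 1) :
    ∃ φ : ℝ, φ ∈ Set.Ico 0 (2 * Real.pi) ∧ Complex.exp (φ * Complex.I) = w := by
  have hn : ‖w‖ = 1 := by
    have h : (‖w‖ : ℂ) ^ 2 = 1 := by rw [← Complex.mul_conj']; exact hw
    have h2 : ‖w‖ ^ 2 = 1 := by exact_mod_cast h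
    nlinarith [norm_nonneg w]
  have h0 := Complex.norm_mul_exp_arg_mul_I w
  rw [hn, Complex.ofReal_one, one_mul] at h0
  have h1 := Complex.neg_pi_lt_arg w
  have h2 := Complex.arg_le_pi w
  by_cases h : 0 ≤ Complex.arg w
  · exact ⟨Complex.arg w, ⟨h, by linarith [Real.pi_pos]⟩, h0⟩
  · refine ⟨Complex.arg w + 2 * Real.pi, ⟨by linarith, by linarith⟩, ?_⟩
    push_cast
    rw [add_mul, Complex.exp_add, h0, Complex.exp_two_pi_mul_I, mul_one]

theorem exp_unit (a : ℝ) :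
    Complex.exp (a * Complex.I) * star (Complex.exp (a * Complex.I)) = 1 := by
  simp [← Complex.exp_conj, ← Complex.exp_add]

theorem ph_one_of_sem {φ : ℝ} (h : semQ (ph φ) = 1) : ph φ = 1 := by
  rw [← ph_zero]
  apply ph_eq
  have := congrFun (congrFun h 0) 0
  rw [semQ_ph] at this
  simpa using this

/-! ## Two modes -/

theorem dg_commute (a b : ℝ) : Commute (down (ph a)) (up (ph b)) := tq_commute (ph a) (ph b)

theorem dg_mul (a b c d : ℝ) : dg a b * dg c d = dg (a + c) (b + d) := by
  simp only [dg, ← ph_mul, map_mul]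
  rw [mul_assoc, ← mul_assoc (up (ph b)), ← (dg_commute c b).eq]
  simp only [mul_assoc]

theorem dg_left (a : ℝ) : dg a 0 = down (ph a) := by rw [dg, ph_zero, map_one, mul_one]
theorem dg_right (a : ℝ) : dg 0 a = up (ph a) := by rw [dg, ph_zero, map_one, one_mul]
theorem dg_zero : dg 0 0 = 1 := by rw [dg_left, ph_zero, map_one]

theorem dg_bs (θ φ : ℝ) : bsq θ * dg φ φ = dg φ φ * bsq θ := by
  simp only [dg, ← d_tq]
  exact cls_eq.2 (LOPPeq.bsPhase θ φ)

theorem bsq_zero : bsq 0 = 1 := by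
  have : (1 : QC 2) = cls (LOPP.wire.tens LOPP.wire) := by
    rw [← tq_cls, cls_wire, tq_one_one]
  rw [this]
  exact cls_eq.2 LOPPeq.bsZero

theorem down_cls {n : ℕ} (C : LOPP n) : down (cls C) = cls (C.tens LOPP.wire) := by
  rw [down_def, ← cls_wire]; rfl

theorem up_cls_one (C : LOPP 1) : up (cls C) = cls (m := 2) (LOPP.wire.tens C) := by
  rw [up_def, ← cls_wire]; rfl

theorem up_cls_two (C : LOPP 2) : up (cls C) = cls (m := 3) (LOPP.wire.tens C) := by
  rw [up_def, ← cls_wire]; rfl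

theorem axF (α₁ α₂ α₃ β₁ β₂ β₃ β₄ : ℝ)
    (h₁ : β₁ ∈ Set.Ico 0 Real.pi) (h₂ : β₂ ∈ Set.Ico 0 Real.pi)
    (h₃ : β₃ ∈ Set.Ico 0 (2 * Real.pi)) (h₄ : β₄ ∈ Set.Ico 0 (2 * Real.pi))
    (h₅ : (β₂ = 0 ∨ β₂ = Real.pi / 2) → β₁ = 0)
    (hsem : semQ (bsq α₃ * (dg α₂ 0 * bsq α₁)) = semQ (dg β₃ β₄ * (bsq β₂ * dg β₁ 0))) :
    bsq α₃ * (dg α₂ 0 * bsq α₁) = dg β₃ β₄ * (bsq β₂ * dg β₁ 0) := by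
  rw [dg_left, dg_left, dg, ← d_tq] at *
  simp only [ph, down_cls, bsq] at *
  exact cls_eq.2 (LOPPeq.euler2 α₁ α₂ α₃ β₁ β₂ β₃ β₄ h₁ h₂ h₃ h₄ h₅ hsem)

theorem exists_polar (z : ℂ) (hz : z ≠ 0) :
    ∃ φ r : ℝ, φ ∈ Set.Ico 0 Real.pi ∧ r ≠ 0 ∧ z = r * Complex.exp (φ * Complex.I) := by
  have h0 := Complex.norm_mul_exp_arg_mul_I z
  have h1 := Complex.neg_pi_lt_arg z
  have h2 := Complex.arg_le_pi z
  have hn : ‖z‖ ≠ 0 := norm_ne_zero_iff.2 hz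
  have hp := Real.pi_pos
  rcases lt_or_ge (Complex.arg z) 0 with h | h
  · refine ⟨Complex.arg z + Real.pi, -‖z‖, ⟨by linarith, by linarith⟩, neg_ne_zero.2 hn, ?_⟩
    push_cast
    rw [add_mul, Complex.exp_add, Complex.exp_pi_mul_I]
    linear_combination -h0
  · rcases h2.lt_or_eq with h3 | h3
    · exact ⟨Complex.arg z, ‖z‖, ⟨h, h3⟩, hn, h0.symm⟩
    · refine ⟨0, -‖z‖, ⟨le_refl _, hp⟩, neg_ne_zero.2 hn, ?_⟩
      rw [h3, Complex.exp_pi_mul_I] at h0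
      push_cast
      simp
      linear_combination -h0

theorem exists_row (x y : ℂ) : ∃ (θ φ : ℝ) (w : ℂ), θ ∈ Set.Ico 0 Real.pi ∧
    φ ∈ Set.Ico 0 Real.pi ∧ ((θ = 0 ∨ θ = Real.pi / 2) → φ = 0) ∧ (y = 0 → θ = 0) ∧
    x = w * ((Real.cos θ : ℂ) * Complex.exp (φ * Complex.I)) ∧
    y = w * (Complex.I * (Real.sin θ : ℂ)) := by
  have hp := Real.pi_pos
  by_cases hy : y = 0
  · exact ⟨0, 0, x, ⟨le_refl _, hp⟩, ⟨le_refl _, hp⟩, by simp, by simp, by simp, by simp [hy]⟩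
  by_cases hx : x = 0
  · refine ⟨Real.pi / 2, 0, -Complex.I * y, ⟨by linarith, by linarith⟩, ⟨le_refl _, hp⟩,
      by simp, fun h => (hy h).elim, by simp [hx], ?_⟩
    simp
    linear_combination y * Complex.I_mul_I
  · obtain ⟨φ, r, hφ, hr, hz⟩ := exists_polar (x * Complex.I / y)
      (div_ne_zero (mul_ne_zero hx Complex.I_ne_zero) hy)
    have hs : Real.sin (Real.pi / 2 - Real.arctan r) = Real.cos (Real.arctan r) := by
      rw [Real.sin_pi_div_two_sub]
    have hcp := Real.cos_arctan_pos r
    have hc : Real.cos (Real.pi / 2 - Real.arctan r) = r * Real.cos (Real.arctan r) := by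
      rw [Real.cos_pi_div_two_sub]
      conv_rhs => rw [← Real.tan_arctan r, Real.arctan_tan (Real.neg_pi_div_two_lt_arctan r)
        (Real.arctan_lt_pi_div_two r)]
      rw [Real.tan_mul_cos hcp.ne']
    have hl := Real.neg_pi_div_two_lt_arctan r
    have hu := Real.arctan_lt_pi_div_two r
    have hcc : ((Real.cos (Real.arctan r) : ℝ) : ℂ) ≠ 0 := by exact_mod_cast hcp.ne'
    refine ⟨Real.pi / 2 - Real.arctan r, φ, y / (Complex.I * (Real.cos (Real.arctan r) : ℂ)),
      ⟨by linarith, by linarith⟩, hφ, ?_, fun h => (hy h).elim, ?_, ?_⟩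
    · rintro (h | h)
      · linarith
      · exfalso
        have : Real.arctan r = 0 := by linarith
        exact hr (Real.arctan_eq_zero_iff.1 this)
    · rw [hc]
      push_cast [-Complex.ofReal_cos]
      have hI := Complex.I_ne_zero
      field_simp at hz ⊢
      linear_combination hz
    · rw [hs]
      have hI := Complex.I_ne_zero
      field_simp

theorem conj_mul_of {n : ℕ} {M : Matrix (Fin n) (Fin n) ℂ} (h : M * Mᴴ = 1) : Mᴴ * M = 1 :=
  mul_eq_one_comm.1 h

theorem unit_mul {n : ℕ} {U M : Matrix (Fin n) (Fin n) ℂ} (h : U * Uᴴ = 1) (h' : Mᴴ * M = 1) :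
    (U * Mᴴ) * (U * Mᴴ)ᴴ = 1 := by
  rw [Matrix.conjTranspose_mul, Matrix.conjTranspose_conjTranspose, Matrix.mul_assoc,
    ← Matrix.mul_assoc Mᴴ, h', Matrix.one_mul, h]

theorem row_div {n : ℕ} {U M : Matrix (Fin (n + 1)) (Fin (n + 1)) ℂ} (hM : M * Mᴴ = 1) (w : ℂ)
    (h : ∀ j, U 0 j = w * M 0 j) (k : Fin (n + 1)) :
    (U * Mᴴ) 0 k = w * (1 : Matrix (Fin (n + 1)) (Fin (n + 1)) ℂ) 0 k := by
  rw [← hM, Matrix.mul_apply, Matrix.mul_apply, Finset.mul_sum]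
  apply Finset.sum_congr rfl
  intro j _
  rw [h]; ring

theorem exists_two (U : Matrix (Fin 2) (Fin 2) ℂ) (hU : U * Uᴴ = 1) :
    ∃ β₁ β₂ β₃ β₄ : ℝ, β₁ ∈ Set.Ico 0 Real.pi ∧ β₂ ∈ Set.Ico 0 Real.pi ∧
    β₃ ∈ Set.Ico 0 (2 * Real.pi) ∧ β₄ ∈ Set.Ico 0 (2 * Real.pi) ∧
    ((β₂ = 0 ∨ β₂ = Real.pi / 2) → β₁ = 0) ∧
    U = semQ (dg β₃ β₄ * (bsq β₂ * dg β₁ 0)) := by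
  obtain ⟨θ, φ, w, hθ, hφ, hc, -, hx, hy⟩ := exists_row (U 0 0) (U 0 1)
  have hM := semQ_unitary (bsq θ * dg φ 0)
  have hM' := conj_mul_of hM
  have hrow : ∀ j, U 0 j = w * (semQ (bsq θ * dg φ 0)) 0 j := by
    intro j
    rw [map_mul, semQ_bsq, semQ_dg]
    fin_cases j
    · simp [Matrix.mul_apply, Fin.sum_univ_two]
      simpa using hx
    · simp [Matrix.mul_apply, Fin.sum_univ_two]
      simpa using hy
  have hV := unit_mul hU hM'
  have hVr := row_div hM w hrow
  have hUV : U = (U * (semQ (bsq θ * dg φ 0))ᴴ) * semQ (bsq θ * dg φ 0) := by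
    rw [Matrix.mul_assoc, hM', Matrix.mul_one]
  generalize U * (semQ (bsq θ * dg φ 0))ᴴ = V at *
  have v00 : V 0 0 = w := by simpa using hVr 0
  have v01 : V 0 1 = 0 := by simpa using hVr 1
  have e00 := congrFun (congrFun hV 0) 0
  have e01 := congrFun (congrFun hV 0) 1
  have e11 := congrFun (congrFun hV 1) 1
  simp only [Matrix.mul_apply, Fin.sum_univ_two, Matrix.conjTranspose_apply, v00, v01] at e00 e01 e11
  simp at e00 e01 e11
  have hw : w ≠ 0 := by rintro rfl; simp at e00
  have v10 : V 1 0 = 0 := by simpa [hw] using e01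
  rw [v10] at e11
  obtain ⟨β₃, h3, e3⟩ := exists_angle w (by simpa using e00)
  obtain ⟨β₄, h4, e4⟩ := exists_angle (V 1 1) (by simpa using e11)
  refine ⟨φ, θ, β₃, β₄, hφ, hθ, h3, h4, hc, ?_⟩
  rw [map_mul, semQ_dg, e3, e4]
  conv_lhs => rw [hUV]
  congr 1
  ext i j
  fin_cases i <;> fin_cases j <;> simp [v00, v01, v10]

/-- Normal shape of two-mode elements. -/
def Form2 (x : QC 2) : Prop := ∃ a b θ c : ℝ, x = dg a b * bsq θ * dg c 0

theorem Form2.mul {x y : QC 2} (hx : Form2 x) (hy : Form2 y) : Form2 (x * y) := by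
  obtain ⟨a, b, θ, c, rfl⟩ := hx
  obtain ⟨a', b', θ', c', rfl⟩ := hy
  obtain ⟨β₁, β₂, β₃, β₄, h₁, h₂, h₃, h₄, h₅, h⟩ :=
    exists_two _ (semQ_unitary (bsq θ * (dg (c + a' - b') 0 * bsq θ')))
  have hF := axF _ _ _ _ _ _ _ h₁ h₂ h₃ h₄ h₅ h
  refine ⟨a + β₃ + b', b + β₄ + b', β₂, β₁ + c', ?_⟩
  have e1 : dg c 0 * dg a' b' = dg (c + a' - b') 0 * dg b' b' := by
    rw [dg_mul, dg_mul]; congr 1 <;> ring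
  calc dg a b * bsq θ * dg c 0 * (dg a' b' * bsq θ' * dg c' 0)
      = dg a b * bsq θ * (dg c 0 * dg a' b') * bsq θ' * dg c' 0 := by simp only [mul_assoc]
    _ = dg a b * bsq θ * dg (c + a' - b') 0 * (dg b' b' * bsq θ') * dg c' 0 := by
        rw [e1]; simp only [mul_assoc]
    _ = dg a b * (bsq θ * (dg (c + a' - b') 0 * bsq θ')) * (dg b' b' * dg c' 0) := by
        rw [← dg_bs]; simp only [mul_assoc]
    _ = dg a b * dg β₃ β₄ * (bsq β₂ * (dg β₁ 0 * (dg b' b' * dg c' 0))) := by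
        rw [hF]; simp only [mul_assoc]
    _ = dg a b * dg β₃ β₄ * (bsq β₂ * (dg b' b' * dg (β₁ + c') 0)) := by
        congr 2; simp only [dg_mul]; congr 1 <;> ring
    _ = dg a b * dg β₃ β₄ * dg b' b' * bsq β₂ * dg (β₁ + c') 0 := by
        rw [← mul_assoc (bsq β₂), dg_bs]; simp only [mul_assoc]
    _ = _ := by simp only [dg_mul]

theorem Form2.dg (a b : ℝ) : Form2 (dg a b) := ⟨a, b, 0, 0, by simp [bsq_zero, dg_zero]⟩

/-- Shapes in low dimensions. -/
def LowForm : (m : ℕ) → QC m → Prop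
  | 0, x => x = 1
  | 1, x => ∃ φ, x = ph φ
  | 2, x => Form2 x
  | _ + 3, _ => True

theorem lowForm_of_good {m : ℕ} {x : QC m} (h : Good x) : LowForm m x := by
  induction h with
  | @one m =>
    match m with
    | 0 => exact rfl
    | 1 => exact ⟨0, ph_zero.symm⟩
    | 2 => have := Form2.dg 0 0; rwa [dg_zero] at this
    | _ + 3 => trivial
  | @mul m x y _ _ hx hy =>
    match m, x, y, hx, hy with
    | 0, x, y, hx, hy =>
      change x = 1 at hx; change y = 1 at hy
      subst hx; subst hy
      exact mul_one _
    | 1, x, y, ⟨a, ha⟩, ⟨b, hb⟩ => exact ⟨a + b, by rw [ha, hb, ph_mul]⟩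
    | 2, x, y, hx, hy => exact Form2.mul hx hy
    | _ + 3, x, y, hx, hy => trivial
  | @up m x _ hx =>
    match m, x, hx with
    | 0, x, hx =>
      change x = 1 at hx; subst hx
      exact ⟨0, by rw [ph_zero, map_one]⟩
    | 1, x, ⟨a, ha⟩ => subst ha; exact (dg_right a) ▸ Form2.dg 0 a
    | _ + 2, x, hx => trivial
  | @down m x _ hx =>
    match m, x, hx with
    | 0, x, hx =>
      change x = 1 at hx; subst hx
      exact ⟨0, by rw [ph_zero, map_one]⟩
    | 1, x, ⟨a, ha⟩ => subst ha; exact (dg_left a) ▸ Form2.dg a 0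
    | _ + 2, x, hx => trivial
  | ph φ => exact ⟨φ, rfl⟩
  | bs θ => exact ⟨0, 0, θ, 0, by simp [dg_zero]⟩

theorem form2_all (x : QC 2) : Form2 x := lowForm_of_good (good_all x)
theorem form1_all (x : QC 1) : ∃ φ, x = ph φ := lowForm_of_good (good_all x)
theorem form0_all (x : QC 0) : x = 1 := lowForm_of_good (good_all x)

theorem dg_eq {a b c d : ℝ} (h : Complex.exp (a * Complex.I) = Complex.exp (c * Complex.I))
    (h' : Complex.exp (b * Complex.I) = Complex.exp (d * Complex.I)) : dg a b = dg c d := by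
  rw [dg, dg, ph_eq h, ph_eq h']

theorem inj_two (x : QC 2) (h : semQ x = 1) : x = 1 := by
  obtain ⟨a, b, θ, c, rfl⟩ := form2_all x
  obtain ⟨a', ha, ea⟩ := exists_angle _ (exp_unit (-a))
  obtain ⟨b', hb, eb⟩ := exists_angle _ (exp_unit (-b))
  have hd : dg a' b' = dg (-a) (-b) := dg_eq ea eb
  have hinv : dg (-a) (-b) * dg a b = 1 := by rw [dg_mul]; simp [dg_zero]
  have hinv' : dg a b * dg (-a) (-b) = 1 := by rw [dg_mul]; simp [dg_zero]
  have hp := Real.pi_pos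
  have key := axF 0 c θ 0 0 a' b' ⟨le_refl _, hp⟩ ⟨le_refl _, hp⟩ ha hb (fun _ => rfl) (by
    rw [hd, bsq_zero, dg_zero, mul_one, mul_one, mul_one]
    have h1 : bsq θ * dg c 0 = dg (-a) (-b) * (dg a b * bsq θ * dg c 0) := by
      simp only [← mul_assoc, hinv, one_mul]
    rw [h1, map_mul, h, mul_one])
  rw [hd, bsq_zero, dg_zero, mul_one, mul_one, mul_one] at key
  rw [mul_assoc, key, hinv']

theorem isUnit_ph (φ : ℝ) : IsUnit (ph φ) :=
  ⟨⟨ph φ, ph (-φ), by rw [ph_mul]; simp [ph_zero], by rw [ph_mul]; simp [ph_zero]⟩, rfl⟩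

theorem bsq_neg (θ : ℝ) : bsq θ * bsq (-θ) = 1 := by
  apply inj_two
  have h := Complex.cos_sq_add_sin_sq θ
  rw [map_mul, semQ_bsq, semQ_bsq]
  ext i j
  fin_cases i <;> fin_cases j <;> simp [Matrix.mul_apply, Fin.sum_univ_two]
  · linear_combination h - Complex.sin θ * Complex.sin θ * Complex.I_mul_I
  · ring
  · ring
  · linear_combination h - Complex.sin θ * Complex.sin θ * Complex.I_mul_I

theorem isUnit_all {m : ℕ} (x : QC m) : IsUnit x := by
  have h := good_all x
  induction h with
  | one => exact isUnit_one
  | mul _ _ h1 h2 => exact h1.mul h2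
  | up _ h => exact h.map up
  | down _ h => exact h.map down
  | ph φ => exact isUnit_ph φ
  | bs θ => 
    refine ⟨⟨bsq θ, bsq (-θ), bsq_neg θ, ?_⟩, rfl⟩
    simpa using bsq_neg (-θ)

/-! ## Three modes -/

theorem dg_left_cls (a : ℝ) : dg a 0 = cls (m := 2) ((LOPP.phase a).tens LOPP.wire) := by
  rw [dg_left]; exact down_cls _

theorem dg_right_cls (a : ℝ) : dg 0 a = cls (m := 2) (LOPP.wire.tens (LOPP.phase a)) := by
  rw [dg_right]; exact up_cls_one _

theorem axG (γ₁ γ₂ γ₃ γ₄ δ₁ δ₂ δ₃ δ₄ δ₅ δ₆ δ₇ δ₈ δ₉ : ℝ)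
    (h₁ : δ₁ ∈ Set.Ico 0 Real.pi) (h₂ : δ₂ ∈ Set.Ico 0 Real.pi)
    (h₃ : δ₃ ∈ Set.Ico 0 Real.pi) (h₄ : δ₄ ∈ Set.Ico 0 Real.pi)
    (h₅ : δ₅ ∈ Set.Ico 0 Real.pi) (h₆ : δ₆ ∈ Set.Ico 0 Real.pi)
    (h₇ : δ₇ ∈ Set.Ico 0 (2 * Real.pi)) (h₈ : δ₈ ∈ Set.Ico 0 (2 * Real.pi))
    (h₉ : δ₉ ∈ Set.Ico 0 (2 * Real.pi))
    (h₁₃ : (δ₃ = 0 ∨ δ₃ = Real.pi / 2) → δ₁ = 0)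
    (h₂₄ : (δ₄ = 0 ∨ δ₄ = Real.pi / 2) → δ₂ = 0)
    (h₃₄ : δ₄ = 0 → δ₃ = 0)
    (h₅₆ : (δ₆ = 0 ∨ δ₆ = Real.pi / 2) → δ₅ = 0)
    (hsem : semQ (down (bsq γ₄) * (up (bsq γ₃) * (down (dg γ₂ 0) * down (bsq γ₁)))) =
      semQ (up (dg 0 δ₉) * (up (dg δ₈ 0) * (down (dg δ₇ 0) * (up (bsq δ₆) *
        (up (dg δ₅ 0) * (down (bsq δ₄) * (up (bsq δ₃) * (down (dg δ₂ 0) *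
          up (dg δ₁ 0))))))))) ) :
    down (bsq γ₄) * (up (bsq γ₃) * (down (dg γ₂ 0) * down (bsq γ₁))) =
      up (dg 0 δ₉) * (up (dg δ₈ 0) * (down (dg δ₇ 0) * (up (bsq δ₆) *
        (up (dg δ₅ 0) * (down (bsq δ₄) * (up (bsq δ₃) * (down (dg δ₂ 0) *
          up (dg δ₁ 0)))))))) := by
  simp only [dg_left_cls, dg_right_cls, bsq, down_cls, up_cls_two] at *
  exact cls_eq.2 (LOPPeq.euler3 γ₁ γ₂ γ₃ γ₄ δ₁ δ₂ δ₃ δ₄ δ₅ δ₆ δ₇ δ₈ δ₉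
    h₁ h₂ h₃ h₄ h₅ h₆ h₇ h₈ h₉ h₁₃ h₂₄ h₃₄ h₅₆ hsem)

theorem exists_three (U : Matrix (Fin 3) (Fin 3) ℂ) (hU : U * Uᴴ = 1) :
    ∃ δ₁ δ₂ δ₃ δ₄ δ₅ δ₆ δ₇ δ₈ δ₉ : ℝ, 
    δ₁ ∈ Set.Ico 0 Real.pi ∧ δ₂ ∈ Set.Ico 0 Real.pi ∧
    δ₃ ∈ Set.Ico 0 Real.pi ∧ δ₄ ∈ Set.Ico 0 Real.pi ∧
    δ₅ ∈ Set.Ico 0 Real.pi ∧ δ₆ ∈ Set.Ico 0 Real.pi ∧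
    δ₇ ∈ Set.Ico 0 (2 * Real.pi) ∧ δ₈ ∈ Set.Ico 0 (2 * Real.pi) ∧
    δ₉ ∈ Set.Ico 0 (2 * Real.pi) ∧
    ((δ₃ = 0 ∨ δ₃ = Real.pi / 2) → δ₁ = 0) ∧
    ((δ₄ = 0 ∨ δ₄ = Real.pi / 2) → δ₂ = 0) ∧
    (δ₄ = 0 → δ₃ = 0) ∧
    ((δ₆ = 0 ∨ δ₆ = Real.pi / 2) → δ₅ = 0) ∧
    U = semQ (up (dg 0 δ₉) * (up (dg δ₈ 0) * (down (dg δ₇ 0) * (up (bsq δ₆) *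
        (up (dg δ₅ 0) * (down (bsq δ₄) * (up (bsq δ₃) * (down (dg δ₂ 0) *
          up (dg δ₁ 0))))))))) := by
  obtain ⟨δ₃, δ₁, w, h₃, h₁, h₁₃, hz3, hy, hz⟩ := exists_row (U 0 1) (U 0 2)
  obtain ⟨δ₄, δ₂, t, h₄, h₂, h₂₄, -, hx, hw⟩ := exists_row (U 0 0) w
  have h₃₄ : δ₄ = 0 → δ₃ = 0 := by
    intro h
    apply hz3
    rw [h] at hw
    rw [hz, hw]; simp
  obtain ⟨M, hMd⟩ : ∃ M : Matrix (Fin 3) (Fin 3) ℂ, M = semQ (down (bsq δ₄) * (up (bsq δ₃) * (down (dg δ₂ 0) *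
          up (dg δ₁ 0)))) := ⟨_, rfl⟩
  have hM : M * Mᴴ = 1 := by rw [hMd]; exact semQ_unitary _
  have hM' : Mᴴ * M = 1 := conj_mul_of hM
  have hrow : ∀ j : Fin 3, U 0 j = t * M 0 j := by
    intro j
    rw [hMd]
    simp only [map_mul, semQ_down_two, semQ_up_two, semQ_dg, semQ_bsq]
    fin_cases j
    · simp [Matrix.mul_apply, Fin.sum_univ_three]
      simpa using hx
    · rw [hw] at hy
      simp [Matrix.mul_apply, Fin.sum_univ_three]
      rw [hy]; push_cast; ring
    · rw [hw] at hz
      simp [Matrix.mul_apply, Fin.sum_univ_three]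
      rw [hz]; push_cast; ring
  have hV : (U * Mᴴ) * (U * Mᴴ)ᴴ = 1 := unit_mul hU hM'
  have hVr : ∀ k : Fin 3, (U * Mᴴ) 0 k = t * (1 : Matrix (Fin 3) (Fin 3) ℂ) 0 k :=
    row_div hM t hrow
  have hUV : U = (U * Mᴴ) * M := by
    rw [Matrix.mul_assoc, hM', Matrix.mul_one]
  generalize U * Mᴴ = V at hV hVr hUV
  have v00 : V 0 0 = t := by simpa using hVr 0
  have v01 : V 0 1 = 0 := by simpa using hVr 1
  have v02 : V 0 2 = 0 := by simpa using hVr 2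
  have ent (i j) := congrFun (congrFun hV i) j
  simp only [Matrix.mul_apply, Fin.sum_univ_three, Matrix.conjTranspose_apply] at ent
  have e00 := ent 0 0
  have e01 := ent 0 1
  have e02 := ent 0 2
  simp [v00, v01, v02] at e00 e01 e02
  have ht : t ≠ 0 := by rintro rfl; simp at e00
  have v10 : V 1 0 = 0 := by simpa [ht] using e01
  have v20 : V 2 0 = 0 := by simpa [ht] using e02
  obtain ⟨δ₇, h₇, e7⟩ := exists_angle t (by simpa using e00)
  obtain ⟨δ₅, δ₆, δ₈, δ₉, h₅, h₆, h₈, h₉, h₅₆, hW⟩ :=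
    exists_two !![V 1 1, V 1 2; V 2 1, V 2 2] (by
      have e11 := ent 1 1
      have e12 := ent 1 2
      have e21 := ent 2 1
      have e22 := ent 2 2
      ext i j
      fin_cases i <;> fin_cases j
      · simpa [Matrix.mul_apply, Fin.sum_univ_two, v10, v20] using e11
      · simpa [Matrix.mul_apply, Fin.sum_univ_two, v10, v20] using e12
      · simpa [Matrix.mul_apply, Fin.sum_univ_two, v10, v20] using e21
      · simpa [Matrix.mul_apply, Fin.sum_univ_two, v10, v20] using e22)
  refine ⟨δ₁, δ₂, δ₃, δ₄, δ₅, δ₆, δ₇, δ₈, δ₉, h₁, h₂, h₃, h₄, h₅, h₆, h₇, h₈, h₉, h₁₃, h₂₄, h₃₄,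
    h₅₆, ?_⟩
  have split : up (dg 0 δ₉) * (up (dg δ₈ 0) * (down (dg δ₇ 0) * (up (bsq δ₆) *
        (up (dg δ₅ 0) * (down (bsq δ₄) * (up (bsq δ₃) * (down (dg δ₂ 0) *
          up (dg δ₁ 0))))))))
      = (up (dg 0 δ₉ * dg δ₈ 0) * (down (dg δ₇ 0) * up (bsq δ₆ * dg δ₅ 0))) *
        (down (bsq δ₄) * (up (bsq δ₃) * (down (dg δ₂ 0) * up (dg δ₁ 0)))) := by
    simp only [map_mul, mul_assoc]
  rw [split, map_mul, ← hMd]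
  conv_lhs => rw [hUV]
  congr 1
  rw [dg_mul, zero_add, add_zero]
  rw [map_mul, semQ_dg] at hW
  rw [map_mul, map_mul, semQ_down_two, semQ_up_two, semQ_up_two, semQ_dg, semQ_dg]
  have w00 := congrFun (congrFun hW 0) 0
  have w01 := congrFun (congrFun hW 0) 1
  have w10 := congrFun (congrFun hW 1) 0
  have w11 := congrFun (congrFun hW 1) 1
  generalize semQ (bsq δ₆ * dg δ₅ 0) = N at *
  simp [Matrix.mul_apply, Fin.sum_univ_two] at w00 w01 w10 w11
  ext i j
  fin_cases i <;> fin_cases j <;>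
    simp [Matrix.mul_apply, Fin.sum_univ_three, v00, v01, v02, v10, v20, e7, w00, w01, w10, w11]

theorem commute_p1 (φ : ℝ) (Y : QC 2) : Commute (down (down (ph φ))) (up Y) := by
  have h : down (down (ph φ)) = tq (ph φ) (1 : QC 2) := by
    rw [down_def, down_def, ← tq_one_one 1 1, ← tq_assoc]; rfl
  rw [h]
  exact tq_commute (ph φ) Y

theorem commute_p3 (φ : ℝ) (X : QC 2) : Commute (down X) (up (up (ph φ))) :=
  fst2_commute (k := 1) X (ph φ)

/-- Shape of three-mode elements. -/
def Form3 (x : QC 3) : Prop := ∃ Y₁ X Y₂ : QC 2, x = up Y₁ * down X * up Y₂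

theorem Form3.up_mul {x : QC 3} (h : Form3 x) (Y : QC 2) : Form3 (up Y * x) := by
  obtain ⟨Y₁, X, Y₂, rfl⟩ := h
  exact ⟨Y * Y₁, X, Y₂, by simp only [map_mul, mul_assoc]⟩

theorem Form3.mul_up {x : QC 3} (h : Form3 x) (Y : QC 2) : Form3 (x * up Y) := by
  obtain ⟨Y₁, X, Y₂, rfl⟩ := h
  exact ⟨Y₁, X, Y₂ * Y, by simp only [map_mul, mul_assoc]⟩

theorem Form3.p1_mul {x : QC 3} (h : Form3 x) (φ : ℝ) : Form3 (down (down (ph φ)) * x) := by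
  obtain ⟨Y₁, X, Y₂, rfl⟩ := h
  refine ⟨Y₁, down (ph φ) * X, Y₂, ?_⟩
  rw [← mul_assoc, ← mul_assoc, (commute_p1 φ Y₁).eq]
  simp only [map_mul, mul_assoc]

theorem Form3.mul_p1 {x : QC 3} (h : Form3 x) (φ : ℝ) : Form3 (x * down (down (ph φ))) := by
  obtain ⟨Y₁, X, Y₂, rfl⟩ := h
  refine ⟨Y₁, X * down (ph φ), Y₂, ?_⟩
  rw [mul_assoc, ← (commute_p1 φ Y₂).eq]
  simp only [map_mul, mul_assoc]

theorem Form3.dg_mul {x : QC 3} (h : Form3 x) (a b : ℝ) : Form3 (down (dg a b) * x) := by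
  rw [dg, map_mul, mul_assoc, ← up_down]
  exact (h.up_mul _).p1_mul _

theorem Form3.mul_dg {x : QC 3} (h : Form3 x) (a b : ℝ) : Form3 (x * down (dg a b)) := by
  rw [dg, map_mul, ← mul_assoc, ← up_down]
  exact (h.mul_p1 _).mul_up _

theorem form3_a (γ₁ γ₂ γ₃ γ₄ : ℝ) :
    Form3 (down (bsq γ₄) * (up (bsq γ₃) * (down (down (ph γ₂)) * down (bsq γ₁)))) := by
  rw [← dg_left]
  obtain ⟨δ₁, δ₂, δ₃, δ₄, δ₅, δ₆, δ₇, δ₈, δ₉, h₁, h₂, h₃, h₄, h₅, h₆, h₇, h₈, h₉, h₁₃, h₂₄, h₃₄,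
    h₅₆, h⟩ := exists_three _ (semQ_unitary
      (down (bsq γ₄) * (up (bsq γ₃) * (down (dg γ₂ 0) * down (bsq γ₁)))))
  rw [axG _ _ _ _ _ _ _ _ _ _ _ _ _ h₁ h₂ h₃ h₄ h₅ h₆ h₇ h₈ h₉ h₁₃ h₂₄ h₃₄ h₅₆ h]
  simp only [dg_left, dg_right]
  have h0 : Form3 (down (bsq δ₄) * up (bsq δ₃)) := ⟨1, bsq δ₄, bsq δ₃, by simp⟩
  have h1 := ((((((((h0.mul_p1 δ₂).mul_up (down (ph δ₁))).up_mul (down (ph δ₅))).up_mul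
    (bsq δ₆)).p1_mul δ₇).up_mul (down (ph δ₈))).up_mul (up (ph δ₉))))
  simpa only [mul_assoc] using h1

theorem form3_b (θ θ' : ℝ) (Z : QC 2) : Form3 (down (bsq θ) * up (bsq θ') * down Z) := by
  obtain ⟨a, b, θ₂, c, rfl⟩ := form2_all Z
  have e : dg a b * bsq θ₂ * dg c 0 = down (ph (a - b)) * bsq θ₂ * dg (b + c) b := by
    have e1 : dg a b = dg (a - b) 0 * dg b b := by rw [dg_mul]; congr 1 <;> ring
    have e2 : dg (b + c) b = dg b b * dg c 0 := by rw [dg_mul]; congr 1; ring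
    rw [e1, e2, ← dg_left, mul_assoc (dg (a - b) 0), ← dg_bs]
    simp only [mul_assoc]
  rw [e]
  have := (form3_a θ₂ (a - b) θ' θ).mul_dg (b + c) b
  simpa only [map_mul, mul_assoc] using this

theorem form3_c (θ' : ℝ) (X Z : QC 2) : Form3 (down X * up (bsq θ') * down Z) := by
  obtain ⟨a, b, θ, c, rfl⟩ := form2_all X
  have := (form3_b θ θ' (down (ph c) * Z)).dg_mul a b
  have e : down (dg a b * bsq θ * dg c 0) * up (bsq θ') * down Z =
      down (dg a b) * (down (bsq θ) * up (bsq θ') * down (down (ph c) * Z)) := by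
    simp only [map_mul, mul_assoc, dg_left]
    rw [← mul_assoc (down (down (ph c))), (commute_p1 c (bsq θ')).eq]
    simp only [mul_assoc]
  rw [e]; exact this

theorem form3_d (X Y Z : QC 2) : Form3 (down X * up Y * down Z) := by
  obtain ⟨a, b, θ, c, rfl⟩ := form2_all Y
  have := (form3_c θ (X * up (ph a)) (up (ph c) * Z)).up_mul (up (ph b))
  have e : down X * up (dg a b * bsq θ * dg c 0) * down Z =
      up (up (ph b)) * (down (X * up (ph a)) * up (bsq θ) * down (up (ph c) * Z)) := by
    rw [dg_left, dg, (dg_commute a b).eq]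
    simp only [map_mul, ← mul_assoc]
    rw [(commute_p3 b X).eq]
    simp only [up_down]
  rw [e]; exact this

/-! ## Any number of modes -/

theorem triple : ∀ (j : ℕ) (X Y Z : QC 2), ∃ Y₁ X' Y₂ : QC 2,
    fst2 (j + 1) X * up (fst2 j Y) * fst2 (j + 1) Z =
      up (fst2 j Y₁) * fst2 (j + 1) X' * up (fst2 j Y₂)
  | 0, X, Y, Z => form3_d X Y Z
  | j + 1, X, Y, Z => by
    obtain ⟨Y₁, X', Y₂, h⟩ := triple j X Y Z
    refine ⟨Y₁, X', Y₂, ?_⟩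
    have := congrArg down h
    simp only [map_mul, ← up_down] at this
    exact this

/-- Shape of elements on at least three modes. -/
def FormN : (m : ℕ) → QC m → Prop
  | 0, _ => True
  | 1, _ => True
  | 2, _ => True
  | k + 3, x => ∃ (A B : QC (k + 2)) (X : QC 2), FormN (k + 2) A ∧ FormN (k + 2) B ∧
      x = up A * fst2 (k + 1) X * up B

theorem FormN.one : ∀ m, FormN m 1
  | 0 => trivial
  | 1 => trivial
  | 2 => trivial
  | k + 3 => ⟨1, 1, 1, FormN.one _, FormN.one _, by simp⟩

theorem FormN.up : ∀ {m : ℕ} {x : QC m}, FormN m x → FormN (m + 1) (up x)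
  | 0, _, _ => trivial
  | 1, _, _ => trivial
  | k + 2, x, h => ⟨x, 1, 1, h, FormN.one _, by simp⟩

theorem FormN.fst2 : ∀ (k : ℕ) (X : QC 2), FormN (k + 2) (fst2 k X)
  | 0, _ => trivial
  | _ + 1, X => ⟨1, 1, X, FormN.one _, FormN.one _, by simp⟩

theorem FormN.down : ∀ {m : ℕ} {x : QC m}, FormN m x → FormN (m + 1) (down x)
  | 0, _, _ => trivial
  | 1, _, _ => trivial
  | 2, x, _ => FormN.fst2 1 x
  | k + 3, x, h => by
    obtain ⟨A, B, X, hA, hB, rfl⟩ := h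
    exact ⟨_root_.down A, _root_.down B, X, hA.down, hB.down, by
      simp only [map_mul, up_down]; rfl⟩

theorem FormN.mul : ∀ {m : ℕ} {x y : QC m}, FormN m x → FormN m y → FormN m (x * y)
  | 0, _, _, _, _ => trivial
  | 1, _, _, _, _ => trivial
  | 2, _, _, _, _ => trivial
  | 3, x, y, hx, hy => by
    obtain ⟨A, B, X, hA, hB, rfl⟩ := hx
    obtain ⟨A', B', X', hA', hB', rfl⟩ := hy
    obtain ⟨Y₁, X'', Y₂, h⟩ := triple 0 X (B * A') X'
    refine ⟨A * Y₁, Y₂ * B', X'', trivial, trivial, ?_⟩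
    have h' : _root_.fst2 (0 + 1) X * _root_.up (B * A') * _root_.fst2 (0 + 1) X' =
      _root_.up Y₁ * _root_.fst2 (0 + 1) X'' * _root_.up Y₂ := h
    have e := congrArg (fun z => _root_.up A * z * _root_.up B') h'
    simpa only [map_mul, mul_assoc] using e
  | k + 4, x, y, hx, hy => by
    obtain ⟨A, B, X, hA, hB, rfl⟩ := hx
    obtain ⟨A', B', X', hA', hB', rfl⟩ := hy
    obtain ⟨K, K', Y, hK, hK', hBA⟩ := FormN.mul hB hA'
    obtain ⟨Y₁, X'', Y₂, h⟩ := triple (k + 1) X Y X'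
    refine ⟨A * (_root_.up K * _root_.fst2 (k + 1) Y₁), _root_.fst2 (k + 1) Y₂ * _root_.up K' * B',
      X'', hA.mul (hK.up.mul (FormN.fst2 _ _)), ((FormN.fst2 _ _).mul hK'.up).mul hB', ?_⟩
    have c1 := (fst2_commute X K).eq
    have c2 := (fst2_commute X' K').eq
    calc _ = _root_.up A * _root_.fst2 (k + 2) X * _root_.up (B * A') *
          _root_.fst2 (k + 2) X' * _root_.up B' := by simp only [map_mul, mul_assoc]
      _ = _root_.up A * (_root_.fst2 (k + 2) X * _root_.up (_root_.up K)) *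
          _root_.up (_root_.fst2 (k + 1) Y) *
          (_root_.up (_root_.up K') * _root_.fst2 (k + 2) X') * _root_.up B' := by
          rw [hBA]; simp only [map_mul, mul_assoc]
      _ = _root_.up A * _root_.up (_root_.up K) * (_root_.fst2 (k + 2) X *
          _root_.up (_root_.fst2 (k + 1) Y) * _root_.fst2 (k + 2) X') *
          _root_.up (_root_.up K') * _root_.up B' := by
          rw [c1, ← c2]; simp only [mul_assoc]
      _ = _ := by
          rw [h]; simp only [map_mul, mul_assoc]

theorem formN_all {m : ℕ} (x : QC m) : FormN m x := by
  have h := good_all x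
  induction h with
  | one => exact FormN.one _
  | mul _ _ h1 h2 => exact h1.mul h2
  | up _ h => exact h.up
  | down _ h => exact h.down
  | ph => trivial
  | bs => trivial

theorem semQ_fst2_col : ∀ (k : ℕ) (X : QC 2)
    (_ : ∀ i, semQ (fst2 k X) i 0 = if i = 0 then 1 else 0) (i : Fin 2),
    semQ X i 0 = if i = 0 then 1 else 0
  | 0, _, h, i => h i
  | k + 1, X, h, i => by
    refine semQ_fst2_col k X (fun i => ?_) i
    have h1 := h i.castSucc
    have h2 := semQ_down_cc (fst2 k X) i 0
    rw [← h2]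
    rw [show (Fin.castSucc (0 : Fin (k + 2))) = 0 from rfl]
    rw [fst2_succ] at h1
    rw [h1]
    simp

theorem fst2_up : ∀ (k : ℕ) (y : QC 1), ∃ z : QC (k + 1), fst2 k (up y) = up z
  | 0, y => ⟨y, rfl⟩
  | k + 1, y => by
    obtain ⟨z, hz⟩ := fst2_up k y
    exact ⟨down z, by rw [fst2_succ, hz, up_down]⟩

theorem two_fix (X : QC 2) (h : ∀ i : Fin 2, semQ X i 0 = if i = 0 then 1 else 0) :
    ∃ φ, X = up (ph φ) := by
  have hU := conj_mul_of (semQ_unitary X)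
  have x00 : semQ X 0 0 = 1 := by simpa using h 0
  have x10 : semQ X 1 0 = 0 := by simpa using h 1
  have e01 := congrFun (congrFun hU 0) 1
  have e11 := congrFun (congrFun hU 1) 1
  simp [Matrix.mul_apply, Fin.sum_univ_two, x00, x10] at e01 e11
  rw [e01] at e11
  obtain ⟨φ, -, hφ⟩ := exists_angle (semQ X 1 1) (by rw [mul_comm]; simpa using e11)
  refine ⟨φ, ?_⟩
  have hs : semQ X = semQ (up (ph φ)) := by
    rw [semQ_up_one, semQ_ph, hφ]
    ext i j
    fin_cases i <;> fin_cases j <;> simp [x00, x10, e01]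
  obtain ⟨u, hu⟩ := isUnit_all (up (ph φ))
  have key := inj_two (X * ↑u⁻¹) (by
    rw [map_mul, hs, ← map_mul, ← hu, Units.mul_inv, map_one])
  rw [Units.mul_inv_eq_one] at key
  rw [key, hu]

theorem inj_all : ∀ (m : ℕ) (x : QC m), semQ x = 1 → x = 1
  | 0, x, _ => form0_all x
  | 1, x, h => by
    obtain ⟨φ, rfl⟩ := form1_all x
    exact ph_one_of_sem h
  | 2, x, h => inj_two x h
  | k + 3, x, h => by
    obtain ⟨A, B, X, -, -, rfl⟩ := formN_all x
    obtain ⟨u, rfl⟩ := isUnit_all A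
    obtain ⟨v, rfl⟩ := isUnit_all B
    have e : semQ (fst2 (k + 1) X) = semQ (up ((↑u⁻¹ : QC (k + 2)) * (↑v⁻¹ : QC (k + 2)))) := by
      have e1 : fst2 (k + 1) X = up (↑u⁻¹ : QC (k + 2)) *
          (up (u : QC (k + 2)) * fst2 (k + 1) X * up (v : QC (k + 2))) *
          up (↑v⁻¹ : QC (k + 2)) := by
        simp only [mul_assoc]
        rw [← map_mul up, Units.mul_inv, ← mul_assoc, ← map_mul up, Units.inv_mul]
        simp
      rw [e1, map_mul, map_mul, h, mul_one, ← map_mul, ← map_mul]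
    obtain ⟨φ, rfl⟩ := two_fix X (semQ_fst2_col (k + 1) X (by
      rw [e]
      intro i
      refine Fin.cases ?_ (fun i => ?_) i
      · rw [semQ_up_zz]; rfl
      · rw [semQ_up_sz]; simp))
    obtain ⟨z, hz⟩ := fst2_up (k + 1) (ph φ)
    rw [hz, ← map_mul, ← map_mul] at h ⊢
    rw [inj_all _ _ (semQ_up_inj _ h), map_one]

theorem completeness {m : ℕ} {C D : LOPP m} (h : sem C = sem D) : LOPPeq C D := by
  rw [← cls_eq]
  obtain ⟨u, hu⟩ := isUnit_all (cls D)
  have key := inj_all m (cls C * ↑u⁻¹) (by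
    rw [map_mul, semQ_cls, h, ← semQ_cls, ← map_mul, ← hu, Units.mul_inv, map_one])
  rw [Units.mul_inv_eq_one] at key
  rw [key, hu]

/-- Soundness and completeness of the equational theory LOPP
(Theorem 1 of the paper): two raw LOPP circuits are provably equal iff they have
the same interpretation. -/
theorem LOPP_soundness_completeness (m : ℕ) (C₁ C₂ : LOPP m) :
    LOPPeq C₁ C₂ ↔ sem C₁ = sem C₂ := by
  exact ⟨soundness, completeness⟩

end
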